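/- Let f : A → B be a homomorphism of finitely generated abelian groups such that for every prime p and every integer m ≥ 1 the induced map f ⊗ id : A ⊗_ℤ ℤ/p^mℤ → B ⊗_ℤ ℤ/p^mℤ is bijective. Then f is bijective. -/

import Mathlib

theorem aux_ideal (I : Ideal ℤ) (hI : ∀ p : ℕ, p.Prime → ∃ r ∈ I, r - 1 ∈ Ideal.span {(p : ℤ)}) :
    (1 : ℤ) ∈ I := by
  obtain ⟨n, hn⟩ := Submodule.IsPrincipal.principal I
  have hn' : I = Ideal.span {n} := hn
  by_cases h1 : n.natAbs = 1
  · rw [hn', Ideal.mem_span_singleton]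
    exact Int.natAbs_dvd_natAbs.mp (by simp [h1])
  · obtain ⟨p, hp, hd⟩ := Nat.exists_prime_and_dvd h1
    obtain ⟨r, hr, hr1⟩ := hI p hp
    rw [hn', Ideal.mem_span_singleton] at hr
    rw [Ideal.mem_span_singleton] at hr1
    have h2 : (p : ℤ) ∣ r := (Int.natCast_dvd.mpr hd).trans hr
    have h3 : (p : ℤ) ∣ 1 := by simpa using dvd_sub h2 hr1
    have h4 : p ∣ 1 := by exact_mod_cast h3
    exact absurd (Nat.dvd_one.mp h4) hp.ne_one

open TensorProduct in
theorem aux_zero (M : Type) [AddCommGroup M] (n : ℕ) (x : M)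
    (hx : x ⊗ₜ[ℤ] (1 : ZMod n) = 0) : x ∈ Ideal.span {(n : ℤ)} • (⊤ : Submodule ℤ M) := by
  let e : ZMod n →ₗ[ℤ] (ℤ ⧸ Ideal.span {(n : ℤ)}) :=
    ((Int.quotientSpanNatEquivZMod n).symm : ZMod n →+ _).toIntLinearMap
  have h1 := congrArg (TensorProduct.map LinearMap.id e) hx
  have he : e 1 = Ideal.Quotient.mk _ 1 := map_one (Int.quotientSpanNatEquivZMod n).symm
  rw [TensorProduct.map_tmul, map_zero, he] at h1
  have h2 := congrArg (TensorProduct.tensorQuotEquivQuotSMul M (Ideal.span {(n : ℤ)})) h1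
  rw [TensorProduct.tensorQuotEquivQuotSMul_tmul_mk, map_zero] at h2
  simpa using h2

open TensorProduct in
theorem aux_surj (M : Type) [AddCommGroup M] (n : ℕ) (t : M ⊗[ℤ] ZMod n) :
    ∃ x : M, t = x ⊗ₜ[ℤ] (1 : ZMod n) := by
  induction t with
  | zero => exact ⟨0, by simp⟩
  | tmul x y =>
    obtain ⟨k, rfl⟩ := ZMod.intCast_surjective y
    refine ⟨k • x, ?_⟩
    rw [TensorProduct.smul_tmul]
    simp
  | add a b ha hb =>
    obtain ⟨x, rfl⟩ := ha
    obtain ⟨y, rfl⟩ := hb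
    exact ⟨x + y, by rw [TensorProduct.add_tmul]⟩

/-- Let `f : A → B` be a homomorphism of finitely generated abelian groups such
that for every prime `p` and every `m ≥ 1` the induced map
`f ⊗ id : A ⊗_ℤ ℤ/p^mℤ → B ⊗_ℤ ℤ/p^mℤ` is bijective. Then `f` is bijective. -/
theorem statement11 (A B : Type) [AddCommGroup A] [AddCommGroup B]
    [Module.Finite ℤ A] [Module.Finite ℤ B] (f : A →+ B)
    (h : ∀ p : ℕ, p.Prime → ∀ m : ℕ, 1 ≤ m →
      Function.Bijective
        (TensorProduct.map f.toIntLinearMap (LinearMap.id (R := ℤ) (M := ZMod (p ^ m))))) :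
    Function.Bijective f := by
  constructor
  · rw [injective_iff_map_eq_zero]
    intro a ha
    have := aux_ideal (LinearMap.ker (LinearMap.toSpanSingleton ℤ A a)) ?_
    · simpa using this
    intro p hp
    have hm : a ∈ (⨅ i : ℕ, (Ideal.span {(p : ℤ)}) ^ i • ⊤ : Submodule ℤ A) := by
      rw [Submodule.mem_iInf]
      intro i
      rcases Nat.eq_zero_or_pos i with rfl | hi
      · simp
      · have h0 := aux_zero A (p ^ i) a ((h p hp i hi).1 (by simp [ha]))
        rw [Ideal.span_singleton_pow]
        exact_mod_cast h0
    rw [Ideal.mem_iInf_smul_pow_eq_bot_iff] at hm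
    obtain ⟨⟨r, hr⟩, hra⟩ := hm
    refine ⟨1 - r, ?_, ?_⟩
    · simp only [LinearMap.mem_ker,
        LinearMap.toSpanSingleton_apply, sub_smul, one_smul]
      exact sub_eq_zero.mpr hra.symm
    · have : (1 - r - 1 : ℤ) = -r := by ring
      rw [this]; exact neg_mem hr
  · set R := LinearMap.range f.toIntLinearMap with hR
    have key := aux_ideal (Module.annihilator ℤ (B ⧸ R)) ?_
    · intro b
      have h1 := Module.mem_annihilator.mp key (R.mkQ b)
      rw [one_smul] at h1
      have h2 : b ∈ R := by simpa using h1
      obtain ⟨a, ha⟩ := h2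
      exact ⟨a, ha⟩
    intro p hp
    have hN := Submodule.exists_sub_one_mem_and_smul_eq_zero_of_fg_of_le_smul
      (Ideal.span {(p : ℤ)}) (⊤ : Submodule ℤ (B ⧸ R)) Module.Finite.fg_top ?_
    · obtain ⟨r, hr, hr0⟩ := hN
      exact ⟨r, Module.mem_annihilator.mpr fun x => hr0 x trivial, hr⟩
    rintro x -
    obtain ⟨b, rfl⟩ := R.mkQ_surjective x
    obtain ⟨t, ht⟩ := (h p hp 1 le_rfl).2 (TensorProduct.tmul ℤ b 1)
    obtain ⟨a, rfl⟩ := aux_surj A _ t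
    have h0 := aux_zero B (p ^ 1) (b - f a) (by
      rw [TensorProduct.sub_tmul, ← ht]; simp)
    rw [pow_one] at h0
    have h3 := Submodule.mem_map_of_mem (f := R.mkQ) h0
    rw [Submodule.map_smul'', map_sub] at h3
    have h4 : R.mkQ (f a) = 0 := by
      simp only [Submodule.mkQ_apply, Submodule.Quotient.mk_eq_zero]
      exact ⟨a, rfl⟩
    rw [h4, sub_zero] at h3
    exact Submodule.smul_mono le_rfl le_top h3
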